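/- For every s₀ > 0 and every natural number n, x_w(s₀ · e^{−nπ/g_v}) = x_w(s₀) + nπ(1 − γ). -/

import Mathlib

/-!
Multiplying `s` by `e^{-nπ/g_v}` adds `nπ` to `φ`. Since `C` is `π`-periodic, `log C(φ)` does not
change, `Φ` grows by `n` times the integral of `1 / C` over a period, and `-g_w δ_v log s` changes
by `nπ g_w δ_v / g_v = -nπγ`. The integral over a period is `π`: the point `(a cos t, sin t / a)`
has squared norm `C(t)` and its polar angle has derivative `1 / C(t)`, and over half a turn of the
ellipse this angle increases by `π`.
-/

theorem log_mul_exp {s : ℝ} (hs : s ≠ 0) (y : ℝ) :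
    Real.log (s * Real.exp y) = Real.log s + y := by
  rw [Real.log_mul hs (Real.exp_ne_zero y), Real.log_exp]

theorem intervalIntegral_add_zsmul_period {E : Type*} [NormedAddCommGroup E] [NormedSpace ℝ E]
    {f : ℝ → E} {T : ℝ} (hf : Function.Periodic f T)
    (hint : ∀ t₁ t₂, IntervalIntegrable f MeasureTheory.volume t₁ t₂) (t₀ t : ℝ) (n : ℤ) :
    ∫ x in t₀..t + n • T, f x = (∫ x in t₀..t, f x) + n • ∫ x in (0 : ℝ)..T, f x := by
  rw [← intervalIntegral.integral_add_adjacent_intervals (hint t₀ t) (hint t _),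
    hf.intervalIntegral_add_zsmul_eq n t hint, hf.intervalIntegral_add_eq t 0, zero_add]

theorem hasDerivAt_arctan_div {u v : ℝ → ℝ} {u' v' t : ℝ}
    (hu : HasDerivAt u u' t) (hv : HasDerivAt v v' t) (hvt : v t ≠ 0) :
    HasDerivAt (fun x => Real.arctan (u x / v x))
      ((u' * v t - u t * v') / (u t ^ 2 + v t ^ 2)) t := by
  refine (hu.fun_div hv hvt).arctan.congr_deriv ?_
  field_simp
  ring

theorem mul_cos_sq_add_mul_sin_sq_pos {p q : ℝ} (hp : 0 < p) (hq : 0 < q) (t : ℝ) :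
    0 < p * Real.cos t ^ 2 + q * Real.sin t ^ 2 := by
  rcases eq_or_ne (Real.cos t) 0 with hcos | hcos
  · have hsin : Real.sin t ^ 2 = 1 := by simpa [hcos] using Real.sin_sq_add_cos_sq t
    simpa [hcos, hsin] using hq
  · positivity

/-- The squared distance from the origin to the point `(p cos t, q sin t)` of the ellipse with
semi-axes `p` and `q`; the function `C` of the theorem is the case `p = a`, `q = 1 / a`. -/
noncomputable def ellipseNormSq (p q t : ℝ) : ℝ :=
  p ^ 2 * Real.cos t ^ 2 + q ^ 2 * Real.sin t ^ 2

/-- A continuous polar angle of the point `(p cos t, q sin t)`, for `p` and `q` positive. The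
`arctan` is the angle from `(cos t, sin t)` to that point, which is periodic and less than a right
angle in size, so that no branch of the argument has to be chosen. -/
noncomputable def ellipseAngle (p q t : ℝ) : ℝ :=
  t + Real.arctan ((q - p) * (Real.sin t * Real.cos t) /
    (p * Real.cos t ^ 2 + q * Real.sin t ^ 2))

section Ellipse

variable {p q : ℝ}

theorem ellipseNormSq_pos (hp : p ≠ 0) (hq : q ≠ 0) (t : ℝ) : 0 < ellipseNormSq p q t :=
  mul_cos_sq_add_mul_sin_sq_pos (sq_pos_of_ne_zero hp) (sq_pos_of_ne_zero hq) t

theorem ellipseNormSq_periodic (p q : ℝ) : Function.Periodic (ellipseNormSq p q) Real.pi := by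
  intro t
  simp [ellipseNormSq]

theorem continuous_ellipseNormSq (p q : ℝ) : Continuous (ellipseNormSq p q) := by
  unfold ellipseNormSq
  fun_prop

-- The squares are those of the coordinates of `(p cos t, q sin t)` in the frame rotated by `t`.
theorem ellipseNormSq_eq_sq_add_sq (p q t : ℝ) :
    ellipseNormSq p q t = ((q - p) * (Real.sin t * Real.cos t)) ^ 2 +
      (p * Real.cos t ^ 2 + q * Real.sin t ^ 2) ^ 2 := by
  unfold ellipseNormSq
  linear_combination (-(p ^ 2 * Real.cos t ^ 2 + q ^ 2 * Real.sin t ^ 2)) *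
    Real.sin_sq_add_cos_sq t

theorem hasDerivAt_ellipseAngle (hp : 0 < p) (hq : 0 < q) (t : ℝ) :
    HasDerivAt (ellipseAngle p q) (p * q / ellipseNormSq p q t) t := by
  have hsin := Real.hasDerivAt_sin t
  have hcos := Real.hasDerivAt_cos t
  have hnum := (hsin.fun_mul hcos).const_mul (q - p)
  have hden := ((hcos.fun_pow 2).const_mul p).fun_add ((hsin.fun_pow 2).const_mul q)
  have harctan := hasDerivAt_arctan_div hnum hden (mul_cos_sq_add_mul_sin_sq_pos hp hq t).ne'
  refine ((hasDerivAt_id' t).fun_add harctan).congr_deriv ?_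
  rw [← ellipseNormSq_eq_sq_add_sq, eq_div_iff (ellipseNormSq_pos hp.ne' hq.ne' t).ne', add_mul,
    div_mul_cancel₀ _ (ellipseNormSq_pos hp.ne' hq.ne' t).ne', ellipseNormSq]
  push_cast
  linear_combination ((q - p) * (p * Real.cos t ^ 2 - q * Real.sin t ^ 2) + p * q) *
    Real.sin_sq_add_cos_sq t

theorem integral_one_div_ellipseNormSq (hp : 0 < p) (hq : 0 < q) :
    ∫ t in (0 : ℝ)..Real.pi, 1 / ellipseNormSq p q t = Real.pi / (p * q) := by
  have hderiv (t : ℝ) :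
      HasDerivAt (fun x => ellipseAngle p q x / (p * q)) (1 / ellipseNormSq p q t) t :=
    ((hasDerivAt_ellipseAngle hp hq t).div_const (p * q)).congr_deriv (by field_simp)
  have hcont : Continuous fun t => 1 / ellipseNormSq p q t :=
    continuous_const.div (continuous_ellipseNormSq p q) fun t =>
      (ellipseNormSq_pos hp.ne' hq.ne' t).ne'
  rw [intervalIntegral.integral_eq_sub_of_hasDerivAt (fun t _ => hderiv t)
    (hcont.intervalIntegrable _ _)]
  simp [ellipseAngle]

end Ellipse

theorem stmt_6_general {C Φ φ xw : ℝ → ℝ} {T gv δv gw c₁ c₂ c₃ : ℝ} (hgv : gv ≠ 0)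
    (hC_per : Function.Periodic C T) (hC_cont : Continuous C) (hC_pos : ∀ t, 0 < C t)
    (hΦ : ∀ y, Φ y = ∫ t in (0 : ℝ)..y, 1 / C t)
    (hφ : ∀ s, φ s = -gv * Real.log s + c₂)
    (hxw : ∀ s, xw s = -gw * δv * Real.log s - (gw / 2) * Real.log (C (φ s))
        + Φ (φ s) + c₃ - gw * Real.log c₁)
    {s₀ : ℝ} (hs₀ : 0 < s₀) (n : ℤ) :
    xw (s₀ * Real.exp (-(n * T) / gv)) =
      xw s₀ + n * ((∫ t in (0 : ℝ)..T, 1 / C t) + T * (gw * δv / gv)) := by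
  have hφ_shift : φ (s₀ * Real.exp (-(n * T) / gv)) = φ s₀ + n • T := by
    rw [hφ, hφ, log_mul_exp hs₀.ne', zsmul_eq_mul]
    field_simp
    ring
  have hΦ_shift : Φ (φ s₀ + n • T) = Φ (φ s₀) + n • ∫ t in (0 : ℝ)..T, 1 / C t := by
    have hper : Function.Periodic (fun t => 1 / C t) T := hC_per.comp (1 / ·)
    have hcont : Continuous fun t => 1 / C t :=
      continuous_const.div hC_cont fun t => (hC_pos t).ne'
    rw [hΦ, hΦ, intervalIntegral_add_zsmul_period hper hcont.intervalIntegrable]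
  rw [hxw, hxw, hφ_shift, hC_per.zsmul n, hΦ_shift, log_mul_exp hs₀.ne', zsmul_eq_mul]
  ring

/-- For every `s₀ > 0` and every natural number `n`,
`x_w(s₀ · e^{−nπ/g_v}) = x_w(s₀) + nπ(1 − γ)`. -/
theorem stmt_6 (a Cv Ev αv Cw Ew αw ε : ℝ)
    (ha : 0 < a) (hCv : 0 < Cv) (hEv : 0 < Ev) (hαv : 0 < αv)
    (hCw : 0 < Cw) (hEw : 0 < Ew) (hαw : 0 < αw) (hε : 0 < ε)
    (δv gv δw gw γ c₁ c₂ c₃ : ℝ)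
    (hδv : δv = Cv / Ev) (hgv : gv = αv / Ev)
    (hδw : δw = Cw / Ew) (hgw : gw = -(αw / Ew))
    (hγ : γ = (αw * Cv) / (αv * Ew))
    (hc₁ : c₁ = ε ^ (1 - δv)) (hc₂ : c₂ = gv * Real.log ε)
    (hc₃ : c₃ = gw * Real.log ε)
    (C Φ : ℝ → ℝ)
    (hC : ∀ φ : ℝ, C φ = a ^ 2 * Real.cos φ ^ 2 + (1 / a ^ 2) * Real.sin φ ^ 2)
    (hΦ : ∀ φ : ℝ, Φ φ = ∫ t in (0:ℝ)..φ, 1 / C t)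
    (φ xw : ℝ → ℝ)
    (hφ : ∀ s : ℝ, φ s = -gv * Real.log s + c₂)
    (hxw : ∀ s : ℝ, xw s = -gw * δv * Real.log s - (gw / 2) * Real.log (C (φ s))
        + Φ (φ s) + c₃ - gw * Real.log c₁) :
    ∀ s₀ : ℝ, 0 < s₀ → ∀ n : ℕ,
      xw (s₀ * Real.exp (-(n * Real.pi) / gv)) = xw s₀ + n * Real.pi * (1 - γ) := by
  intro s₀ hs₀ n
  obtain rfl : C = ellipseNormSq a (1 / a) :=
    funext fun t => by rw [hC, ellipseNormSq, one_div_pow]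
  have ha_inv : 0 < 1 / a := one_div_pos.mpr ha
  have hgv_ne : gv ≠ 0 := by rw [hgv]; positivity
  have hγ_eq : gw * δv / gv = -γ := by rw [hgw, hδv, hgv, hγ]; field_simp
  rw [← Int.cast_natCast n, stmt_6_general hgv_ne (ellipseNormSq_periodic a (1 / a))
    (continuous_ellipseNormSq a (1 / a)) (ellipseNormSq_pos ha.ne' ha_inv.ne') hΦ hφ hxw hs₀ n,
    integral_one_div_ellipseNormSq ha ha_inv, mul_one_div_cancel ha.ne', hγ_eq]
  ring
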